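/- Let C be a 2-reduced cocommutative dg coalgebra over ℚ. The twisted coextension functor t_* sends quasi-isomorphisms of left dg ΩC-modules to t-equivalences of C-comodules: if f : A → B is a quasi-isomorphism of ΩC-modules then t^!(t_*f) : ΩC ⊗_t (C ⊗^t A) → ΩC ⊗_t (C ⊗^t B) is a quasi-isomorphism. -/

import Mathlib

open scoped TensorProduct

noncomputable section

/-- A homologically graded differential graded `ℚ`-vector space (chain complex of
`ℚ`-vector spaces presented as a graded module with a degree `-1` square-zero differential). -/
structure DGVect : Type 1 where
  carrier : Type
  [isAddCommGroup : AddCommGroup carrier]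
  [isModule : Module ℚ carrier]
  grading : ℤ → Submodule ℚ carrier
  [isDecomp : DirectSum.Decomposition grading]
  d : carrier →ₗ[ℚ] carrier
  d_mem : ∀ (n : ℤ), ∀ x ∈ grading n, d x ∈ grading (n - 1)
  d_sq : d.comp d = 0

attribute [instance] DGVect.isAddCommGroup DGVect.isModule DGVect.isDecomp

/-- The operator acting on the degree `n` graded component by `(-1)^(k*n)`. -/
def signOpOf {V : Type} [AddCommGroup V] [Module ℚ V] (g : ℤ → Submodule ℚ V)
    [DirectSum.Decomposition g] (k : ℤ) : V →ₗ[ℚ] V :=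
  (DirectSum.toModule ℚ ℤ V fun n => ((-1 : ℚ) ^ (k * n)) • (g n).subtype).comp
    (DirectSum.decomposeLinearEquiv g).toLinearMap

/-- The Koszul parity operator, acting by `(-1)^n` in degree `n`. -/
def parityOf {V : Type} [AddCommGroup V] [Module ℚ V] (g : ℤ → Submodule ℚ V)
    [DirectSum.Decomposition g] : V →ₗ[ℚ] V := signOpOf g 1

def DGVect.parity (V : DGVect) : V.carrier →ₗ[ℚ] V.carrier := parityOf V.grading

/-- A graded object is bounded below if it vanishes in all sufficiently negative degrees. -/
def DGVect.BoundedBelow (V : DGVect) : Prop := ∃ b : ℤ, ∀ n : ℤ, n < b → V.grading n = ⊥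

/-- The Koszul signed braiding `v ⊗ w ↦ (-1)^{|v||w|} w ⊗ v` of graded vector spaces. -/
def kSwapOf {V W : Type} [AddCommGroup V] [Module ℚ V] [AddCommGroup W] [Module ℚ W]
    (gV : ℤ → Submodule ℚ V) (gW : ℤ → Submodule ℚ W)
    [DirectSum.Decomposition gV] [DirectSum.Decomposition gW] :
    V ⊗[ℚ] W →ₗ[ℚ] W ⊗[ℚ] V :=
  TensorProduct.lift
    ((DirectSum.toModule ℚ ℤ (W →ₗ[ℚ] W ⊗[ℚ] V) (fun i =>
        (((DirectSum.toModule ℚ ℤ (V →ₗ[ℚ] W ⊗[ℚ] V) (fun j =>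
              ((-1 : ℚ) ^ (i * j)) • ((TensorProduct.mk ℚ W V).comp (gW j).subtype))).comp
            (DirectSum.decomposeLinearEquiv gW).toLinearMap).flip).comp
          (gV i).subtype)).comp
      (DirectSum.decomposeLinearEquiv gV).toLinearMap)

/-- The degree `n` part of the tensor product grading:
the span of the homogeneous tensors of total degree `n`. -/
def tensorGrading {V W : Type} [AddCommGroup V] [Module ℚ V] [AddCommGroup W] [Module ℚ W]
    (gV : ℤ → Submodule ℚ V) (gW : ℤ → Submodule ℚ W) (n : ℤ) : Submodule ℚ (V ⊗[ℚ] W) :=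
  ⨆ p : {p : ℤ × ℤ // p.1 + p.2 = n},
    LinearMap.range (TensorProduct.map (gV p.1.1).subtype (gW p.1.2).subtype)

/-- `f` is a quasi-isomorphism from the complex `(V, dV)` to the complex `(W, dW)`:
it induces a bijection on homology (`ker d / im d`). -/
def IsQuasiIso {V W : Type} [AddCommGroup V] [Module ℚ V] [AddCommGroup W] [Module ℚ W]
    (dV : V →ₗ[ℚ] V) (dW : W →ₗ[ℚ] W) (f : V →ₗ[ℚ] W) : Prop :=
  (∀ x : V, dV x = 0 → (∃ y, f x = dW y) → ∃ z, x = dV z) ∧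
  (∀ w : W, dW w = 0 → ∃ x, dV x = 0 ∧ ∃ y, w - f x = dW y)

/-- A differential graded algebra over `ℚ`. -/
structure DGAlgebra extends DGVect where
  mul : carrier →ₗ[ℚ] carrier →ₗ[ℚ] carrier
  one : carrier
  one_mem : one ∈ grading 0
  mul_mem : ∀ (i j : ℤ) (x y : carrier), x ∈ grading i → y ∈ grading j →
    mul x y ∈ grading (i + j)
  mul_assoc' : ∀ x y z : carrier, mul (mul x y) z = mul x (mul y z)
  one_mul' : ∀ x : carrier, mul one x = x
  mul_one' : ∀ x : carrier, mul x one = x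
  leibniz : ∀ (i : ℤ) (x y : carrier), x ∈ grading i →
    d (mul x y) = mul (d x) y + ((-1 : ℚ) ^ i) • mul x (d y)

/-- The multiplication of a dg algebra as a map out of the tensor product. -/
def DGAlgebra.mulMap (A : DGAlgebra) : A.carrier ⊗[ℚ] A.carrier →ₗ[ℚ] A.carrier :=
  TensorProduct.lift A.mul

/-- A dg algebra is connective if it is concentrated in non-negative degrees. -/
def DGAlgebra.Connective (A : DGAlgebra) : Prop := ∀ n : ℤ, n < 0 → A.grading n = ⊥

/-- A (coassociative counital) differential graded coalgebra over `ℚ`,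
non-negatively graded. -/
structure DGCoalgebra extends DGVect where
  comul : carrier →ₗ[ℚ] carrier ⊗[ℚ] carrier
  counit : carrier →ₗ[ℚ] ℚ
  nonneg : ∀ n : ℤ, n < 0 → grading n = ⊥
  comul_mem : ∀ (n : ℤ), ∀ x ∈ grading n, comul x ∈ tensorGrading grading grading n
  counit_zero : ∀ (n : ℤ), n ≠ 0 → ∀ x ∈ grading n, counit x = 0
  coassoc : (TensorProduct.assoc ℚ carrier carrier carrier).toLinearMap.comp
      ((TensorProduct.map comul LinearMap.id).comp comul)
      = (TensorProduct.map LinearMap.id comul).comp comul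
  counit_comul_left : (TensorProduct.lid ℚ carrier).toLinearMap.comp
      ((TensorProduct.map counit LinearMap.id).comp comul) = LinearMap.id
  counit_comul_right : (TensorProduct.rid ℚ carrier).toLinearMap.comp
      ((TensorProduct.map LinearMap.id counit).comp comul) = LinearMap.id
  comul_chain : comul.comp d
      = (TensorProduct.map d LinearMap.id + TensorProduct.map (parityOf grading) d).comp comul
  counit_chain : counit.comp d = 0

/-- Cocommutativity: the comultiplication is invariant under the Koszul signed twist. -/
def DGCoalgebra.Cocomm (C : DGCoalgebra) : Prop :=
  (kSwapOf C.grading C.grading).comp C.comul = C.comul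

/-- A coaugmented dg coalgebra: a dg coalgebra with a coaugmentation `η : ℚ → C`,
recorded by the grouplike element `one = η 1` in degree `0`. -/
structure CoaugDGCoalgebra extends DGCoalgebra where
  one : carrier
  one_mem : one ∈ grading 0
  counit_one : counit one = 1
  comul_one : comul one = one ⊗ₜ[ℚ] one

/-- A coaugmented dg coalgebra is 2-reduced if `C₀ = ℚ` (spanned by the coaugmentation)
and `C₁ = 0`. -/
def CoaugDGCoalgebra.TwoReduced (C : CoaugDGCoalgebra) : Prop :=
  C.grading 0 = Submodule.span ℚ {C.one} ∧ C.grading 1 = ⊥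

/-- A twisting chain `τ : C ⇝ A`: a degree `-1` linear map satisfying
`d(τc) = -τ(dc) - (-1)^{|c₍₀₎|} τ(c₍₀₎)·τ(c₍₁₎)`. -/
structure TwistingChain (C : DGCoalgebra) (A : DGAlgebra) where
  toFun : C.carrier →ₗ[ℚ] A.carrier
  mem : ∀ (n : ℤ), ∀ x ∈ C.grading n, toFun x ∈ A.grading (n - 1)
  twist : A.d.comp toFun + toFun.comp C.d
      + A.mulMap.comp ((TensorProduct.map (toFun.comp (parityOf C.grading)) toFun).comp C.comul)
      = 0

/-- A left dg module over a dg algebra. -/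
structure DGModule (A : DGAlgebra) extends DGVect where
  smul : A.carrier →ₗ[ℚ] carrier →ₗ[ℚ] carrier
  smul_mem : ∀ (i j : ℤ) (a : A.carrier) (x : carrier), a ∈ A.grading i → x ∈ grading j →
    smul a x ∈ grading (i + j)
  one_smul' : ∀ x : carrier, smul A.one x = x
  mul_smul' : ∀ (a b : A.carrier) (x : carrier), smul (A.mul a b) x = smul a (smul b x)
  leibniz : ∀ (i : ℤ) (a : A.carrier) (x : carrier), a ∈ A.grading i →
    d (smul a x) = smul (A.d a) x + ((-1 : ℚ) ^ i) • smul a (d x)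

/-- The action of a dg module as a map out of the tensor product. -/
def DGModule.actionMap {A : DGAlgebra} (M : DGModule A) :
    A.carrier ⊗[ℚ] M.carrier →ₗ[ℚ] M.carrier := TensorProduct.lift M.smul

/-- A left dg comodule over a dg coalgebra. -/
structure DGComodule (C : DGCoalgebra) extends DGVect where
  coact : carrier →ₗ[ℚ] C.carrier ⊗[ℚ] carrier
  coact_mem : ∀ (n : ℤ), ∀ x ∈ grading n, coact x ∈ tensorGrading C.grading grading n
  coassoc : (TensorProduct.assoc ℚ C.carrier C.carrier carrier).toLinearMap.comp
      ((TensorProduct.map C.comul LinearMap.id).comp coact)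
      = (TensorProduct.map LinearMap.id coact).comp coact
  counit_coact : (TensorProduct.lid ℚ carrier).toLinearMap.comp
      ((TensorProduct.map C.counit LinearMap.id).comp coact) = LinearMap.id
  coact_chain : coact.comp d
      = (TensorProduct.map C.d LinearMap.id + TensorProduct.map (parityOf C.grading) d).comp coact

/-- Morphisms of dg modules: degree `0` graded chain maps commuting with the action. -/
def IsModuleHom (A : DGAlgebra) (M M' : DGModule A)
    (g : M.carrier →ₗ[ℚ] M'.carrier) : Prop :=
  (∀ (n : ℤ), ∀ x ∈ M.grading n, g x ∈ M'.grading n) ∧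
  g.comp M.d = M'.d.comp g ∧
  g.comp M.actionMap = M'.actionMap.comp (TensorProduct.map LinearMap.id g)

/-- Morphisms of dg comodules: degree `0` graded chain maps commuting with the coaction. -/
def IsComoduleHom (C : DGCoalgebra) (N N' : DGComodule C)
    (f : N.carrier →ₗ[ℚ] N'.carrier) : Prop :=
  (∀ (n : ℤ), ∀ x ∈ N.grading n, f x ∈ N'.grading n) ∧
  f.comp N.d = N'.d.comp f ∧
  (TensorProduct.map LinearMap.id f).comp N.coact = N'.coact.comp f

/-- The `A`-action on a twisted extension `A ⊗_τ N`: multiplication on the first factor. -/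
def extAction (A : DGAlgebra) (N : Type) [AddCommGroup N] [Module ℚ N] :
    A.carrier ⊗[ℚ] (A.carrier ⊗[ℚ] N) →ₗ[ℚ] A.carrier ⊗[ℚ] N :=
  (TensorProduct.map A.mulMap LinearMap.id).comp
    (TensorProduct.assoc ℚ A.carrier A.carrier N).symm.toLinearMap

/-- The differential of the twisted extension `A ⊗_τ N`:
`d(a ⊗ n) = da ⊗ n + (-1)^{|a|} a ⊗ dn - (-1)^{|a|} a·τ(n₍₀₎) ⊗ n₍₁₎`
for a `C`-comodule `(N, dN, ρ)`. -/
def extDiff (C : DGCoalgebra) (A : DGAlgebra) (τ : TwistingChain C A)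
    (N : Type) [AddCommGroup N] [Module ℚ N]
    (dN : N →ₗ[ℚ] N) (ρ : N →ₗ[ℚ] C.carrier ⊗[ℚ] N) :
    A.carrier ⊗[ℚ] N →ₗ[ℚ] A.carrier ⊗[ℚ] N :=
  TensorProduct.map A.d LinearMap.id + TensorProduct.map (parityOf A.grading) dN
    - (TensorProduct.map
        (A.mulMap.comp (TensorProduct.map (parityOf A.grading) τ.toFun)) LinearMap.id).comp
        ((TensorProduct.assoc ℚ A.carrier C.carrier N).symm.toLinearMap.comp
          (TensorProduct.map LinearMap.id ρ))

/-- The `C`-coaction on a twisted coextension `C ⊗^τ M`, namely `Δ ⊗ id`. -/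
def coextCoact (C : DGCoalgebra) (M : Type) [AddCommGroup M] [Module ℚ M] :
    C.carrier ⊗[ℚ] M →ₗ[ℚ] C.carrier ⊗[ℚ] (C.carrier ⊗[ℚ] M) :=
  (TensorProduct.assoc ℚ C.carrier C.carrier M).toLinearMap.comp
    (TensorProduct.map C.comul LinearMap.id)

/-- The differential of the twisted coextension `C ⊗^τ M`, expressed in terms of the map
`tact : C ⊗ M → M`, `c ⊗ m ↦ τ(c)·m`:
`d(c ⊗ m) = dc ⊗ m + (-1)^{|c|} c ⊗ dm + (-1)^{|c₍₀₎|} c₍₀₎ ⊗ τ(c₍₁₎)·m`. -/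
def coextDiffFrom (C : DGCoalgebra) (M : Type) [AddCommGroup M] [Module ℚ M]
    (dM : M →ₗ[ℚ] M) (tact : C.carrier ⊗[ℚ] M →ₗ[ℚ] M) :
    C.carrier ⊗[ℚ] M →ₗ[ℚ] C.carrier ⊗[ℚ] M :=
  TensorProduct.map C.d LinearMap.id + TensorProduct.map (parityOf C.grading) dM
    + (TensorProduct.map (parityOf C.grading) tact).comp (coextCoact C M)

/-- The differential of the twisted coextension `C ⊗^τ M` of an `A`-module `(M, dM, act)`. -/
def coextDiff (C : DGCoalgebra) (A : DGAlgebra) (τ : TwistingChain C A)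
    (M : Type) [AddCommGroup M] [Module ℚ M]
    (dM : M →ₗ[ℚ] M) (act : A.carrier ⊗[ℚ] M →ₗ[ℚ] M) :
    C.carrier ⊗[ℚ] M →ₗ[ℚ] C.carrier ⊗[ℚ] M :=
  coextDiffFrom C M dM (act.comp (TensorProduct.map τ.toFun LinearMap.id))

/-- Morphisms of dg algebras. -/
structure DGAlgebraHom (A B : DGAlgebra) where
  toLinearMap : A.carrier →ₗ[ℚ] B.carrier
  mem : ∀ (n : ℤ), ∀ x ∈ A.grading n, toLinearMap x ∈ B.grading n
  chain : toLinearMap.comp A.d = B.d.comp toLinearMap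
  map_one : toLinearMap A.one = B.one
  map_mul : ∀ x y : A.carrier, toLinearMap (A.mul x y) = B.mul (toLinearMap x) (toLinearMap y)

/-- Data exhibiting a dg algebra as the cobar construction `ΩC` of a coaugmented
dg coalgebra `C`, via the universal twisting chain `t : C ⇝ ΩC`:
dg algebra maps `ΩC → A` correspond bijectively to twisting chains `C ⇝ A`
vanishing on the coaugmentation. -/
structure CobarData (C : CoaugDGCoalgebra) where
  alg : DGAlgebra
  t : TwistingChain C.toDGCoalgebra alg
  t_one : t.toFun C.one = 0
  univ : ∀ (A : DGAlgebra) (τ : TwistingChain C.toDGCoalgebra A), τ.toFun C.one = 0 →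
    ∃! F : DGAlgebraHom alg A, F.toLinearMap.comp t.toFun = τ.toFun

/-- A morphism of `C`-comodules is a `t`-equivalence if the induced morphism of twisted
extensions `ΩC ⊗_t N → ΩC ⊗_t M` is a quasi-isomorphism. -/
def IsTEquiv (C : CoaugDGCoalgebra) (Ω : CobarData C) (N M : DGComodule C.toDGCoalgebra)
    (f : N.carrier →ₗ[ℚ] M.carrier) : Prop :=
  IsQuasiIso (extDiff C.toDGCoalgebra Ω.alg Ω.t N.carrier N.d N.coact)
    (extDiff C.toDGCoalgebra Ω.alg Ω.t M.carrier M.d M.coact)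
    (TensorProduct.map LinearMap.id f)

/-! ## Statement 7: `t_*` sends quasi-isomorphisms to `t`-equivalences -/

section ParityLemmas

variable {V : Type} [AddCommGroup V] [Module ℚ V] (g : ℤ → Submodule ℚ V)
  [DirectSum.Decomposition g]

theorem parityOf_of_mem {n : ℤ} {x : V} (hx : x ∈ g n) :
    parityOf g x = ((-1 : ℚ) ^ n) • x := by
  simp only [parityOf, signOpOf, LinearMap.comp_apply, LinearEquiv.coe_coe,
    DirectSum.decomposeLinearEquiv_apply]
  rw [DirectSum.decompose_of_mem g hx, ← DirectSum.lof_eq_of ℚ, DirectSum.toModule_lof]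
  simp

theorem linMap_ext_grading {W : Type} [AddCommGroup W] [Module ℚ W] {f h : V →ₗ[ℚ] W}
    (H : ∀ n, ∀ x ∈ g n, f x = h x) : f = h := by
  ext x
  induction x using DirectSum.Decomposition.inductionOn g with
  | zero => simp
  | homogeneous m => exact H _ _ m.2
  | add a b ha hb => simp [ha, hb]

theorem negOne_zpow_sq (n : ℤ) : ((-1 : ℚ) ^ n) * ((-1 : ℚ) ^ n) = 1 := by
  rw [← mul_zpow]; simp

theorem negOne_zpow_pred (n : ℤ) : ((-1 : ℚ) ^ (n - 1)) = - ((-1 : ℚ) ^ n) := by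
  rw [zpow_sub₀ (by norm_num)]; simp [div_neg]

theorem parityOf_parityOf (x : V) : parityOf g (parityOf g x) = x := by
  have : (parityOf g).comp (parityOf g) = LinearMap.id := by
    apply linMap_ext_grading g
    intro n x hx
    simp [parityOf_of_mem g hx, smul_smul, negOne_zpow_sq]
  exact LinearMap.congr_fun this x

end ParityLemmas

theorem DGVect.parity_d (V : DGVect) (x : V.carrier) :
    parityOf V.grading (V.d x) = - V.d (parityOf V.grading x) := by
  have : (parityOf V.grading).comp V.d = - V.d.comp (parityOf V.grading) := by
    apply linMap_ext_grading V.grading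
    intro n x hx
    simp [parityOf_of_mem _ hx, parityOf_of_mem _ (V.d_mem n x hx), negOne_zpow_pred]
  exact LinearMap.congr_fun this x

theorem DGVect.d_d (V : DGVect) (x : V.carrier) : V.d (V.d x) = 0 :=
  LinearMap.congr_fun V.d_sq x

theorem DGAlgebra.leibniz_parity (A : DGAlgebra) (x y : A.carrier) :
    A.d (A.mul x y) = A.mul (A.d x) y + A.mul (parityOf A.grading x) (A.d y) := by
  have : A.d.comp (A.mul.flip y) = A.mul.flip y ∘ₗ A.d
      + (A.mul.flip (A.d y)).comp (parityOf A.grading) := by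
    apply linMap_ext_grading A.grading
    intro n x hx
    simp [parityOf_of_mem _ hx, A.leibniz n x y hx]
  exact LinearMap.congr_fun this x

theorem DGModule.leibniz_parity {A : DGAlgebra} (M : DGModule A) (x : A.carrier)
    (y : M.carrier) :
    M.d (M.smul x y) = M.smul (A.d x) y + M.smul (parityOf A.grading x) (M.d y) := by
  have : M.d.comp (M.smul.flip y) = M.smul.flip y ∘ₗ A.d
      + (M.smul.flip (M.d y)).comp (parityOf A.grading) := by
    apply linMap_ext_grading A.grading
    intro n x hx
    simp [parityOf_of_mem _ hx, M.leibniz n x y hx]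
  exact LinearMap.congr_fun this x

theorem DGAlgebra.parity_mul (A : DGAlgebra) (x y : A.carrier) :
    parityOf A.grading (A.mul x y)
      = A.mul (parityOf A.grading x) (parityOf A.grading y) := by
  have : A.mul.compr₂ (parityOf A.grading)
      = A.mul.compl₁₂ (parityOf A.grading) (parityOf A.grading) := by
    apply linMap_ext_grading A.grading
    intro n x hx
    apply linMap_ext_grading A.grading
    intro m y hy
    simp [parityOf_of_mem _ hx, parityOf_of_mem _ hy,
      parityOf_of_mem _ (A.mul_mem _ _ _ _ hx hy), smul_smul, zpow_add₀, mul_comm]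
  exact LinearMap.congr_fun (LinearMap.congr_fun this x) y

theorem TwistingChain.parity_apply {C : DGCoalgebra} {A : DGAlgebra} (τ : TwistingChain C A)
    (c : C.carrier) :
    parityOf A.grading (τ.toFun c) = - τ.toFun (parityOf C.grading c) := by
  have : (parityOf A.grading).comp τ.toFun = - τ.toFun.comp (parityOf C.grading) := by
    apply linMap_ext_grading C.grading
    intro n x hx
    simp [parityOf_of_mem _ hx, parityOf_of_mem _ (τ.mem n x hx), negOne_zpow_pred]
  exact LinearMap.congr_fun this c

/-- Induction over the homogeneous part of a tensor product. -/
theorem tensorGrading_induction {V W : Type} [AddCommGroup V] [Module ℚ V] [AddCommGroup W]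
    [Module ℚ W] {gV : ℤ → Submodule ℚ V} {gW : ℤ → Submodule ℚ W} {n : ℤ}
    (P : Submodule ℚ (V ⊗[ℚ] W))
    (H : ∀ i j, i + j = n → ∀ v ∈ gV i, ∀ w ∈ gW j, v ⊗ₜ[ℚ] w ∈ P) :
    tensorGrading gV gW n ≤ P := by
  refine iSup_le ?_
  rintro ⟨⟨i, j⟩, hij⟩
  rintro _ ⟨z, rfl⟩
  induction z with
  | zero => simp
  | tmul x y => simpa using H i j hij x x.2 y y.2
  | add a b ha hb => rw [map_add]; exact P.add_mem ha hb

theorem DGCoalgebra.comul_parity (C : DGCoalgebra) (c : C.carrier) :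
    C.comul (parityOf C.grading c)
      = TensorProduct.map (parityOf C.grading) (parityOf C.grading) (C.comul c) := by
  have : C.comul.comp (parityOf C.grading)
      = (TensorProduct.map (parityOf C.grading) (parityOf C.grading)).comp C.comul := by
    apply linMap_ext_grading C.grading
    intro n x hx
    have key : tensorGrading C.grading C.grading n ≤
        LinearMap.eqLocus (((-1 : ℚ) ^ n) • LinearMap.id)
          (TensorProduct.map (parityOf C.grading) (parityOf C.grading)) := by
      apply tensorGrading_induction
      intro i j hij v hv w hw
      simp [LinearMap.mem_eqLocus, parityOf_of_mem _ hv, parityOf_of_mem _ hw, ← hij, zpow_add₀,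
        TensorProduct.smul_tmul', TensorProduct.tmul_smul, smul_smul, mul_comm]
    have := key (C.comul_mem n x hx)
    simpa [LinearMap.mem_eqLocus, parityOf_of_mem _ hx] using this
  exact LinearMap.congr_fun this c

section Ext

variable (C : DGCoalgebra) (A : DGAlgebra) (τ : TwistingChain C A)

theorem TwistingChain.d_apply (c : C.carrier) :
    A.d (τ.toFun c) + τ.toFun (C.d c)
      + A.mulMap (TensorProduct.map (τ.toFun.comp (parityOf C.grading)) τ.toFun (C.comul c))
      = 0 :=
  LinearMap.congr_fun τ.twist c

variable (N : Type) [AddCommGroup N] [Module ℚ N]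

/-- `c ⊗ n ↦ a·t(c) ⊗ n`. -/
def extPhi (a : A.carrier) : C.carrier ⊗[ℚ] N →ₗ[ℚ] A.carrier ⊗[ℚ] N :=
  TensorProduct.map ((A.mul a).comp τ.toFun) LinearMap.id

/-- `c ⊗ (c' ⊗ n) ↦ a·t(π c)·t(c') ⊗ n`. -/
def extPsi (a : A.carrier) : C.carrier ⊗[ℚ] (C.carrier ⊗[ℚ] N) →ₗ[ℚ] A.carrier ⊗[ℚ] N :=
  (TensorProduct.map ((A.mul a).comp (A.mulMap.comp
    (TensorProduct.map (τ.toFun.comp (parityOf C.grading)) τ.toFun))) LinearMap.id).comp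
    (TensorProduct.assoc ℚ C.carrier C.carrier N).symm.toLinearMap

theorem extPhi_neg (a : A.carrier) (z : C.carrier ⊗[ℚ] N) :
    extPhi C A τ N (-a) z = - extPhi C A τ N a z := by
  induction z with
  | zero => simp
  | tmul x y => simp [extPhi, TensorProduct.neg_tmul]
  | add a b ha hb => rw [map_add, ha, hb, map_add, neg_add]

theorem extDiff_tmul (dN : N →ₗ[ℚ] N) (ρ : N →ₗ[ℚ] C.carrier ⊗[ℚ] N) (a : A.carrier) (n : N) :
    extDiff C A τ N dN ρ (a ⊗ₜ n) = A.d a ⊗ₜ n + parityOf A.grading a ⊗ₜ dN n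
      - extPhi C A τ N (parityOf A.grading a) (ρ n) := by
  simp only [extDiff, LinearMap.sub_apply, LinearMap.add_apply, TensorProduct.map_tmul,
    LinearMap.id_apply, LinearMap.comp_apply, LinearEquiv.coe_coe]
  congr 1
  generalize ρ n = z
  induction z with
  | zero => simp
  | tmul x y => simp [extPhi, DGAlgebra.mulMap]
  | add a b ha hb => rw [TensorProduct.tmul_add, map_add, map_add, ha, hb, map_add]

theorem extDiff_extPhi (dN : N →ₗ[ℚ] N) (ρ : N →ₗ[ℚ] C.carrier ⊗[ℚ] N) (a : A.carrier)
    (z : C.carrier ⊗[ℚ] N) :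
    extDiff C A τ N dN ρ (extPhi C A τ N a z) = extPhi C A τ N (A.d a) z
      - extPhi C A τ N (parityOf A.grading a)
          (TensorProduct.map C.d LinearMap.id z + TensorProduct.map (parityOf C.grading) dN z)
      - extPsi C A τ N (parityOf A.grading a)
          ((TensorProduct.assoc ℚ C.carrier C.carrier N)
            (TensorProduct.map C.comul LinearMap.id z))
      + extPsi C A τ N (parityOf A.grading a) (TensorProduct.map LinearMap.id ρ z) := by
  induction z with
  | zero => simp
  | add a b ha hb => simp only [map_add, ha, hb]; abel
  | tmul c n =>
    have h1 : extPhi C A τ N (parityOf A.grading (A.mul a (τ.toFun c))) (ρ n)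
        = - extPsi C A τ N (parityOf A.grading a) (c ⊗ₜ ρ n) := by
      rw [A.parity_mul, τ.parity_apply, map_neg, extPhi_neg]
      congr 1
      generalize ρ n = z
      induction z with
      | zero => simp
      | tmul x y => simp [extPhi, extPsi, DGAlgebra.mulMap, A.mul_assoc']
      | add a b ha hb => rw [TensorProduct.tmul_add, map_add, ha, hb, map_add]
    have h2 : extPsi C A τ N (parityOf A.grading a)
          ((TensorProduct.assoc ℚ C.carrier C.carrier N) (C.comul c ⊗ₜ n))
        = - (A.mul (parityOf A.grading a) (A.d (τ.toFun c)) ⊗ₜ n)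
          - (A.mul (parityOf A.grading a) (τ.toFun (C.d c)) ⊗ₜ n) := by
      have := TwistingChain.d_apply C A τ c
      have h3 := eq_neg_of_add_eq_zero_right this
      simp only [extPsi, LinearMap.comp_apply, LinearEquiv.coe_coe,
        LinearEquiv.symm_apply_apply, TensorProduct.map_tmul]
      rw [h3]
      simp only [map_neg, map_add, TensorProduct.neg_tmul, TensorProduct.add_tmul,
        LinearMap.id_apply]
      abel
    have h0 : extPhi C A τ N a (c ⊗ₜ n) = A.mul a (τ.toFun c) ⊗ₜ n := by simp [extPhi]
    rw [h0, extDiff_tmul, h1]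
    simp only [TensorProduct.map_tmul, LinearMap.id_apply, h2, LinearMap.add_apply, map_add]
    simp only [extPhi, TensorProduct.map_tmul, LinearMap.comp_apply, LinearMap.id_apply,
      A.leibniz_parity, A.parity_mul, τ.parity_apply, TensorProduct.add_tmul, map_neg,
      TensorProduct.neg_tmul]
    abel

theorem extDiff_sq (dN : N →ₗ[ℚ] N) (ρ : N →ₗ[ℚ] C.carrier ⊗[ℚ] N)
    (hd : ∀ n, dN (dN n) = 0)
    (hchain : ∀ n, ρ (dN n) = TensorProduct.map C.d LinearMap.id (ρ n)
      + TensorProduct.map (parityOf C.grading) dN (ρ n))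
    (hco : ∀ n, (TensorProduct.assoc ℚ C.carrier C.carrier N)
            (TensorProduct.map C.comul LinearMap.id (ρ n)) = TensorProduct.map LinearMap.id ρ (ρ n))
    (x : A.carrier ⊗[ℚ] N) :
    extDiff C A τ N dN ρ (extDiff C A τ N dN ρ x) = 0 := by
  induction x with
  | zero => simp
  | add a b ha hb => simp [ha, hb]
  | tmul a n =>
    rw [extDiff_tmul, map_sub, map_add, extDiff_tmul, extDiff_tmul, extDiff_extPhi, hco, hchain,
      hd, parityOf_parityOf, A.parity_d, A.d_d, extPhi_neg]
    simp [TensorProduct.neg_tmul]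
    abel

variable (M : DGModule A)

/-- `c₀ ⊗ c₁ ↦ π c₀ ⊗ t(c₁) m`. -/
def coextKappa (m : M.carrier) : C.carrier ⊗[ℚ] C.carrier →ₗ[ℚ] C.carrier ⊗[ℚ] M.carrier :=
  TensorProduct.map (parityOf C.grading) ((M.smul.flip m).comp τ.toFun)

theorem coextDiff_tmul (c : C.carrier) (m : M.carrier) :
    coextDiff C A τ M.carrier M.d M.actionMap (c ⊗ₜ m)
      = C.d c ⊗ₜ m + parityOf C.grading c ⊗ₜ M.d m + coextKappa C A τ M m (C.comul c) := by
  simp only [coextDiff, coextDiffFrom, coextCoact, LinearMap.add_apply, TensorProduct.map_tmul,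
    LinearMap.id_apply, LinearMap.comp_apply, LinearEquiv.coe_coe]
  congr 1
  generalize C.comul c = z
  induction z with
  | zero => simp
  | tmul x y => simp [coextKappa, DGModule.actionMap]
  | add a b ha hb => rw [TensorProduct.add_tmul, map_add, map_add, ha, hb, map_add]

theorem DGCoalgebra.comul_d (c : C.carrier) :
    C.comul (C.d c) = TensorProduct.map C.d LinearMap.id (C.comul c)
      + TensorProduct.map (parityOf C.grading) C.d (C.comul c) :=
  LinearMap.congr_fun C.comul_chain c

/-- `c₀ ⊗ (c₁ ⊗ c₂) ↦ c₀ ⊗ t(π c₁) t(c₂) m`. -/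
def coextTheta (m : M.carrier) :
    C.carrier ⊗[ℚ] (C.carrier ⊗[ℚ] C.carrier) →ₗ[ℚ] C.carrier ⊗[ℚ] M.carrier :=
  TensorProduct.map LinearMap.id ((M.smul.flip m).comp (A.mulMap.comp
    (TensorProduct.map (τ.toFun.comp (parityOf C.grading)) τ.toFun)))

theorem coextDiff_kappa (m : M.carrier) (z : C.carrier ⊗[ℚ] C.carrier) :
    coextDiff C A τ M.carrier M.d M.actionMap (coextKappa C A τ M m z)
      = - coextKappa C A τ M m (TensorProduct.map C.d LinearMap.id z)
        - coextKappa C A τ M m (TensorProduct.map (parityOf C.grading) C.d z)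
        - coextKappa C A τ M (M.d m)
            (TensorProduct.map (parityOf C.grading) (parityOf C.grading) z)
        - coextTheta C A τ M m (TensorProduct.map LinearMap.id C.comul z)
        + coextTheta C A τ M m ((TensorProduct.assoc ℚ C.carrier C.carrier C.carrier)
            (TensorProduct.map C.comul LinearMap.id z)) := by
  induction z with
  | zero => simp
  | add a b ha hb => simp only [map_add, ha, hb]; abel
  | tmul x y =>
    have h0 : coextKappa C A τ M m (x ⊗ₜ y) = parityOf C.grading x ⊗ₜ M.smul (τ.toFun y) m := by
      simp [coextKappa]
    have h1 : coextKappa C A τ M (M.smul (τ.toFun y) m) (C.comul (parityOf C.grading x))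
        = coextTheta C A τ M m ((TensorProduct.assoc ℚ C.carrier C.carrier C.carrier)
            (C.comul x ⊗ₜ y)) := by
      rw [C.comul_parity]
      generalize C.comul x = z
      induction z with
      | zero => simp
      | tmul u v => simp [coextKappa, coextTheta, DGAlgebra.mulMap, M.mul_smul', parityOf_parityOf]
      | add a b ha hb => rw [TensorProduct.add_tmul, map_add, map_add, ha, hb, map_add, map_add]
    have h2 : coextTheta C A τ M m (x ⊗ₜ C.comul y)
        = - (x ⊗ₜ M.smul (A.d (τ.toFun y)) m) - (x ⊗ₜ M.smul (τ.toFun (C.d y)) m) := by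
      have h3 := eq_neg_of_add_eq_zero_right (TwistingChain.d_apply C A τ y)
      simp only [coextTheta, LinearMap.comp_apply, TensorProduct.map_tmul]
      rw [h3]
      simp only [map_neg, map_add, TensorProduct.tmul_neg, TensorProduct.tmul_add,
        LinearMap.id_apply, LinearMap.flip_apply]
      abel
    rw [h0, coextDiff_tmul, h1]
    simp only [TensorProduct.map_tmul, LinearMap.id_apply, h2]
    simp only [coextKappa, TensorProduct.map_tmul, LinearMap.comp_apply, LinearMap.flip_apply,
      M.leibniz_parity, τ.parity_apply, C.parity_d, parityOf_parityOf, TensorProduct.tmul_add,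
      TensorProduct.tmul_neg, TensorProduct.neg_tmul, map_neg, LinearMap.neg_apply]
    abel

theorem coextDiff_sq (x : C.carrier ⊗[ℚ] M.carrier) :
    coextDiff C A τ M.carrier M.d M.actionMap
      (coextDiff C A τ M.carrier M.d M.actionMap x) = 0 := by
  induction x with
  | zero => simp
  | add a b ha hb => simp [ha, hb]
  | tmul c m =>
    have hco : (TensorProduct.assoc ℚ C.carrier C.carrier C.carrier)
            (TensorProduct.map C.comul LinearMap.id (C.comul c))
          = TensorProduct.map LinearMap.id C.comul (C.comul c) :=
      LinearMap.congr_fun C.coassoc c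
    rw [coextDiff_tmul, map_add, map_add, coextDiff_tmul, coextDiff_tmul, coextDiff_kappa, hco,
      C.comul_d, C.comul_parity, C.d_d, M.d_d, C.parity_d]
    simp only [parityOf_parityOf, map_add, TensorProduct.neg_tmul, TensorProduct.zero_tmul,
      TensorProduct.tmul_zero]
    abel

theorem coextCoact_chain (x : C.carrier ⊗[ℚ] M.carrier) :
    coextCoact C M.carrier (coextDiff C A τ M.carrier M.d M.actionMap x)
      = TensorProduct.map C.d LinearMap.id (coextCoact C M.carrier x)
        + TensorProduct.map (parityOf C.grading)
          (coextDiff C A τ M.carrier M.d M.actionMap) (coextCoact C M.carrier x) := by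
  induction x with
  | zero => simp
  | add a b ha hb => simp only [map_add, ha, hb]; abel
  | tmul c m =>
    have hr : ∀ (c : C.carrier) (m : M.carrier), coextCoact C M.carrier (c ⊗ₜ m)
        = (TensorProduct.assoc ℚ C.carrier C.carrier M.carrier) (C.comul c ⊗ₜ m) := by
      intro c m; simp [coextCoact]
    have hco : (TensorProduct.assoc ℚ C.carrier C.carrier C.carrier)
            (TensorProduct.map C.comul LinearMap.id (C.comul c))
          = TensorProduct.map LinearMap.id C.comul (C.comul c) :=
      LinearMap.congr_fun C.coassoc c
    have h1 : ∀ z : C.carrier ⊗[ℚ] C.carrier,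
        coextCoact C M.carrier (coextKappa C A τ M m z)
        = TensorProduct.map (parityOf C.grading) (coextKappa C A τ M m)
          ((TensorProduct.assoc ℚ C.carrier C.carrier C.carrier)
            (TensorProduct.map C.comul LinearMap.id z)) := by
      intro z
      induction z with
      | zero => simp
      | add a b ha hb => simp only [map_add, ha, hb]
      | tmul x y =>
        simp only [coextKappa, TensorProduct.map_tmul, hr, C.comul_parity, LinearMap.id_apply]
        generalize C.comul x = z
        induction z with
        | zero => simp
        | tmul u v => simp
        | add a b ha hb => simp only [map_add, TensorProduct.add_tmul, ha, hb]
    have h2 : ∀ z : C.carrier ⊗[ℚ] C.carrier,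
        TensorProduct.map C.d LinearMap.id
            ((TensorProduct.assoc ℚ C.carrier C.carrier M.carrier) (z ⊗ₜ m))
          + TensorProduct.map (parityOf C.grading)
          (coextDiff C A τ M.carrier M.d M.actionMap)
            ((TensorProduct.assoc ℚ C.carrier C.carrier M.carrier) (z ⊗ₜ m))
        = (TensorProduct.assoc ℚ C.carrier C.carrier M.carrier)
            ((TensorProduct.map C.d LinearMap.id z
              + TensorProduct.map (parityOf C.grading) C.d z) ⊗ₜ m)
          + (TensorProduct.assoc ℚ C.carrier C.carrier M.carrier)
            ((TensorProduct.map (parityOf C.grading) (parityOf C.grading) z) ⊗ₜ M.d m)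
          + TensorProduct.map (parityOf C.grading) (coextKappa C A τ M m)
              (TensorProduct.map LinearMap.id C.comul z) := by
      intro z
      induction z with
      | zero => simp
      | add a b ha hb =>
        refine Eq.trans ?_ ((congrArg₂ (· + ·) ha hb).trans ?_)
        · simp only [map_add, TensorProduct.add_tmul]; abel
        · simp only [map_add, TensorProduct.add_tmul]; abel
      | tmul x y =>
        simp only [TensorProduct.assoc_tmul, LinearMap.add_apply, TensorProduct.map_tmul,
          coextDiff_tmul, TensorProduct.add_tmul, map_add, TensorProduct.tmul_add,
          LinearMap.id_apply]
        abel
    rw [hr, h2, coextDiff_tmul, map_add, map_add, hr, hr, h1, hco, C.comul_d, C.comul_parity]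

theorem coextCoact_coassoc (N : Type) [AddCommGroup N] [Module ℚ N] (x : C.carrier ⊗[ℚ] N) :
    (TensorProduct.assoc ℚ C.carrier C.carrier (C.carrier ⊗[ℚ] N))
      (TensorProduct.map C.comul LinearMap.id (coextCoact C N x))
      = TensorProduct.map LinearMap.id (coextCoact C N) (coextCoact C N x) := by
  induction x with
  | zero => simp
  | add a b ha hb => simp only [map_add, ha, hb]
  | tmul c m =>
    have hr : ∀ (c : C.carrier) (m : N), coextCoact C N (c ⊗ₜ m)
        = (TensorProduct.assoc ℚ C.carrier C.carrier N) (C.comul c ⊗ₜ m) := by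
      intro c m; simp [coextCoact]
    have hco : (TensorProduct.assoc ℚ C.carrier C.carrier C.carrier)
            (TensorProduct.map C.comul LinearMap.id (C.comul c))
          = TensorProduct.map LinearMap.id C.comul (C.comul c) :=
      LinearMap.congr_fun C.coassoc c
    rw [hr]
    have h1 : ∀ z : C.carrier ⊗[ℚ] C.carrier,
        (TensorProduct.assoc ℚ C.carrier C.carrier (C.carrier ⊗[ℚ] N))
          (TensorProduct.map C.comul LinearMap.id
            ((TensorProduct.assoc ℚ C.carrier C.carrier N) (z ⊗ₜ m)))
        = TensorProduct.map LinearMap.id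
            ((TensorProduct.assoc ℚ C.carrier C.carrier N).toLinearMap.comp
              ((TensorProduct.mk ℚ _ N).flip m))
          ((TensorProduct.assoc ℚ C.carrier C.carrier C.carrier)
            (TensorProduct.map C.comul LinearMap.id z)) := by
      intro z
      induction z with
      | zero => simp
      | add a b ha hb => simp only [map_add, TensorProduct.add_tmul, ha, hb]
      | tmul x y =>
        simp only [TensorProduct.assoc_tmul, TensorProduct.map_tmul, LinearMap.id_apply]
        generalize C.comul x = z
        induction z with
        | zero => simp
        | tmul u v => simp
        | add a b ha hb => simp only [map_add, TensorProduct.add_tmul, ha, hb]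
    have h2 : ∀ z : C.carrier ⊗[ℚ] C.carrier,
        TensorProduct.map LinearMap.id (coextCoact C N)
            ((TensorProduct.assoc ℚ C.carrier C.carrier N) (z ⊗ₜ m))
        = TensorProduct.map LinearMap.id
            ((TensorProduct.assoc ℚ C.carrier C.carrier N).toLinearMap.comp
              ((TensorProduct.mk ℚ _ N).flip m))
          (TensorProduct.map LinearMap.id C.comul z) := by
      intro z
      induction z with
      | zero => simp
      | add a b ha hb => simp only [map_add, TensorProduct.add_tmul, ha, hb]
      | tmul x y => simp [hr]
    rw [h1, h2, hco]

end Ext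

section Abstract

variable {V W : Type} [AddCommGroup V] [Module ℚ V] [AddCommGroup W] [Module ℚ W]

theorem exists_contraction (d : V →ₗ[ℚ] V) (hd : ∀ x, d (d x) = 0)
    (hac : ∀ x, d x = 0 → ∃ y, x = d y) :
    ∃ s : V →ₗ[ℚ] V, ∀ x, d (s x) + s (d x) = x := by
  obtain ⟨σ, hσ⟩ := d.rangeRestrict.exists_rightInverse_of_surjective d.range_rangeRestrict
  have hσ' : ∀ y : LinearMap.range d, d (σ y) = y := fun y =>
    congrArg Subtype.val (LinearMap.congr_fun hσ y)
  let p : V →ₗ[ℚ] LinearMap.range d :=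
    LinearMap.codRestrict _ (LinearMap.id - σ.comp d.rangeRestrict) (by
      intro x
      obtain ⟨y, hy⟩ := hac (x - σ (d.rangeRestrict x)) (by
        rw [map_sub, hσ']; simp)
      exact ⟨y, by simpa using hy.symm⟩)
  have hp : ∀ x, ((p x : LinearMap.range d) : V) = x - σ (d.rangeRestrict x) := fun x => rfl
  refine ⟨σ.comp p, fun x => ?_⟩
  simp only [LinearMap.comp_apply]
  rw [hσ', hp]
  have h0 : d.rangeRestrict (d x) = 0 := Subtype.ext (by simpa using hd x)
  have : p (d x) = d.rangeRestrict x := by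
    apply Subtype.ext
    rw [hp, h0]
    simp
  rw [this]
  abel

theorem acyclic_of_perturbation (D D0 S : V →ₗ[ℚ] V) (F : ℕ → Submodule ℚ V)
    (hF0 : F 0 = ⊥) (hex : ∀ x, ∃ p, x ∈ F p) (hDD : ∀ x, D (D x) = 0)
    (h0 : ∀ x, D0 (S x) + S (D0 x) = x) (hS : ∀ p, ∀ x ∈ F p, S x ∈ F p)
    (h1 : ∀ p, ∀ x ∈ F (p + 1), D x - D0 x ∈ F p) (x : V) (hx : D x = 0) :
    ∃ y, x = D y := by
  have key : ∀ p, ∀ x ∈ F p, D x = 0 → ∃ y, x = D y := by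
    intro p
    induction p with
    | zero =>
      intro x hx _
      rw [hF0] at hx
      exact ⟨0, by rw [(Submodule.mem_bot ℚ).1 hx, map_zero]⟩
    | succ p ih =>
      intro x hx hDx
      have e : x - D (S x) = - (D (S x) - D0 (S x)) - S (D x - D0 x) := by
        rw [hDx, zero_sub, map_neg]
        nth_rewrite 1 [← h0 x]
        abel
      obtain ⟨y, hy⟩ := ih (x - D (S x)) (by
        rw [e]
        exact (F p).sub_mem ((F p).neg_mem (h1 p _ (hS _ _ hx))) (hS _ _ (h1 p _ hx)))
        (by rw [map_sub, hDD, hDx, sub_zero])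
      exact ⟨y + S x, by rw [map_add, ← hy]; abel⟩
  obtain ⟨p, hp⟩ := hex x
  exact key p x hp hx

/-- The differential of the mapping cone. -/
def coneDiff (dV : V →ₗ[ℚ] V) (dW : W →ₗ[ℚ] W) (f : V →ₗ[ℚ] W) : V × W →ₗ[ℚ] V × W :=
  LinearMap.prod (-(dV.comp (LinearMap.fst ℚ V W)))
    (f.comp (LinearMap.fst ℚ V W) + dW.comp (LinearMap.snd ℚ V W))

theorem coneDiff_apply (dV : V →ₗ[ℚ] V) (dW : W →ₗ[ℚ] W) (f : V →ₗ[ℚ] W) (x : V × W) :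
    coneDiff dV dW f x = (- dV x.1, f x.1 + dW x.2) := rfl

theorem coneDiff_sq (dV : V →ₗ[ℚ] V) (dW : W →ₗ[ℚ] W) (f : V →ₗ[ℚ] W)
    (hV : ∀ x, dV (dV x) = 0) (hW : ∀ x, dW (dW x) = 0) (hf : ∀ x, f (dV x) = dW (f x))
    (x : V × W) : coneDiff dV dW f (coneDiff dV dW f x) = 0 := by
  simp [coneDiff_apply, hV, hW, hf]

theorem isQuasiIso_of_cone (dV : V →ₗ[ℚ] V) (dW : W →ₗ[ℚ] W) (f : V →ₗ[ℚ] W)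
    (h : ∀ x, coneDiff dV dW f x = 0 → ∃ y, x = coneDiff dV dW f y) : IsQuasiIso dV dW f := by
  constructor
  · rintro x hx ⟨y, hy⟩
    obtain ⟨z, hz⟩ := h (x, -y) (by simp [coneDiff_apply, hx, hy])
    exact ⟨-z.1, by simpa [coneDiff_apply] using congrArg Prod.fst hz⟩
  · intro w hw
    obtain ⟨z, hz⟩ := h (0, w) (by simp [coneDiff_apply, hw])
    have h1 := congrArg Prod.fst hz
    have h2 := congrArg Prod.snd hz
    simp only [coneDiff_apply] at h1 h2
    exact ⟨z.1, by simpa using h1.symm, z.2, by rw [h2]; abel⟩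

theorem cone_of_isQuasiIso (dV : V →ₗ[ℚ] V) (dW : W →ₗ[ℚ] W) (f : V →ₗ[ℚ] W)
    (hf : ∀ x, f (dV x) = dW (f x)) (h : IsQuasiIso dV dW f) (x : V × W)
    (hx : coneDiff dV dW f x = 0) : ∃ y, x = coneDiff dV dW f y := by
  have h1 := congrArg Prod.fst hx
  have h2 := congrArg Prod.snd hx
  simp only [coneDiff_apply, Prod.fst_zero, Prod.snd_zero, neg_eq_zero] at h1 h2
  obtain ⟨z, hz⟩ := h.1 x.1 h1 ⟨-x.2, by rw [map_neg]; exact eq_neg_of_add_eq_zero_left h2⟩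
  obtain ⟨u, hu, y, hy⟩ := h.2 (x.2 + f z) (by rw [map_add, ← hf, ← hz, add_comm, h2])
  refine ⟨(u - z, y), ?_⟩
  rw [coneDiff_apply]
  refine Prod.ext ?_ ?_
  · simp [hu, ← hz]
  · simp only [← hy, map_sub]; abel

end Abstract

section Filtration

variable (C : DGCoalgebra) (A : DGAlgebra)

/-- The filtration of `A ⊗ (C ⊗ M)` by the degree in `C`. -/
def twFilt (M : Type) [AddCommGroup M] [Module ℚ M] (p : ℕ) :
    Submodule ℚ (A.carrier ⊗[ℚ] (C.carrier ⊗[ℚ] M)) :=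
  Submodule.span ℚ {x | ∃ (q : ℤ) (a : A.carrier) (c : C.carrier) (m : M),
    q < p ∧ c ∈ C.grading q ∧ x = a ⊗ₜ (c ⊗ₜ m)}

/-- The untwisted differential, ignoring the differential of `C`. -/
def twD0 (M : Type) [AddCommGroup M] [Module ℚ M] (dM : M →ₗ[ℚ] M) :
    A.carrier ⊗[ℚ] (C.carrier ⊗[ℚ] M) →ₗ[ℚ] A.carrier ⊗[ℚ] (C.carrier ⊗[ℚ] M) :=
  TensorProduct.map A.d LinearMap.id
    + TensorProduct.map (parityOf A.grading) (TensorProduct.map (parityOf C.grading) dM)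

/-- `1 ⊗ 1 ⊗ u`. -/
def twQ {M M' : Type} [AddCommGroup M] [Module ℚ M] [AddCommGroup M'] [Module ℚ M']
    (u : M →ₗ[ℚ] M') :
    A.carrier ⊗[ℚ] (C.carrier ⊗[ℚ] M) →ₗ[ℚ] A.carrier ⊗[ℚ] (C.carrier ⊗[ℚ] M') :=
  TensorProduct.map LinearMap.id (TensorProduct.map LinearMap.id u)

/-- `π ⊗ π ⊗ u`. -/
def twP {M M' : Type} [AddCommGroup M] [Module ℚ M] [AddCommGroup M'] [Module ℚ M']
    (u : M →ₗ[ℚ] M') :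
    A.carrier ⊗[ℚ] (C.carrier ⊗[ℚ] M) →ₗ[ℚ] A.carrier ⊗[ℚ] (C.carrier ⊗[ℚ] M') :=
  TensorProduct.map (parityOf A.grading) (TensorProduct.map (parityOf C.grading) u)

/-- Triple tensor extensionality. -/
theorem tensor3_ext {X Y Z T : Type} [AddCommGroup X] [Module ℚ X] [AddCommGroup Y] [Module ℚ Y]
    [AddCommGroup Z] [Module ℚ Z] [AddCommGroup T] [Module ℚ T]
    {f g : X ⊗[ℚ] (Y ⊗[ℚ] Z) →ₗ[ℚ] T}
    (h : ∀ x y z, f (x ⊗ₜ (y ⊗ₜ z)) = g (x ⊗ₜ (y ⊗ₜ z))) : f = g := by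
  ext x y z
  exact h x y z

variable {M M' M'' : Type} [AddCommGroup M] [Module ℚ M] [AddCommGroup M'] [Module ℚ M']
  [AddCommGroup M''] [Module ℚ M'']

theorem twD0_twP (d : M →ₗ[ℚ] M) (d' : M' →ₗ[ℚ] M') (u : M →ₗ[ℚ] M') :
    (twD0 C A M' d').comp (twP C A u) + (twP C A u).comp (twD0 C A M d)
      = twQ C A (d'.comp u + u.comp d) := by
  apply tensor3_ext
  intro a c m
  simp [twD0, twP, twQ, parityOf_parityOf, A.parity_d, TensorProduct.tmul_add,
    TensorProduct.neg_tmul]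
  abel

theorem twD0_twQ (d : M →ₗ[ℚ] M) (d' : M' →ₗ[ℚ] M') (u : M →ₗ[ℚ] M') :
    (twD0 C A M' d').comp (twQ C A u) - (twQ C A u).comp (twD0 C A M d)
      = twP C A (d'.comp u - u.comp d) := by
  apply tensor3_ext
  intro a c m
  simp [twD0, twP, twQ, TensorProduct.tmul_sub]

theorem twQ_twQ (u : M →ₗ[ℚ] M') (v : M' →ₗ[ℚ] M'') :
    (twQ C A v).comp (twQ C A u) = twQ C A (v.comp u) := by
  apply tensor3_ext
  intro a c m
  simp [twQ]

theorem twQ_twP (u : M →ₗ[ℚ] M') (v : M' →ₗ[ℚ] M'') :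
    (twQ C A v).comp (twP C A u) = twP C A (v.comp u) := by
  apply tensor3_ext
  intro a c m
  simp [twQ, twP]

theorem twP_twQ (u : M →ₗ[ℚ] M') (v : M' →ₗ[ℚ] M'') :
    (twP C A v).comp (twQ C A u) = twP C A (v.comp u) := by
  apply tensor3_ext
  intro a c m
  simp [twQ, twP]

theorem twQ_add (u v : M →ₗ[ℚ] M') : twQ C A (u + v) = twQ C A u + twQ C A v := by
  apply tensor3_ext
  intro a c m
  simp [twQ, TensorProduct.tmul_add]

theorem twP_add (u v : M →ₗ[ℚ] M') : twP C A (u + v) = twP C A u + twP C A v := by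
  apply tensor3_ext
  intro a c m
  simp [twP, TensorProduct.tmul_add]

theorem twQ_neg (u : M →ₗ[ℚ] M') : twQ C A (-u) = -twQ C A u := by
  apply tensor3_ext
  intro a c m
  simp [twQ, TensorProduct.tmul_neg]

theorem twQ_id : twQ C A (LinearMap.id : M →ₗ[ℚ] M) = LinearMap.id := by
  apply tensor3_ext
  intro a c m
  simp [twQ]

theorem twP_zero : twP C A (0 : M →ₗ[ℚ] M') = 0 := by
  apply tensor3_ext
  intro a c m
  simp [twP]

theorem twFilt_mono {p q : ℕ} (h : p ≤ q) : twFilt C A M p ≤ twFilt C A M q := by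
  apply Submodule.span_mono
  rintro x ⟨r, a, c, m, hr, hc, rfl⟩
  exact ⟨r, a, c, m, by omega, hc, rfl⟩

theorem twFilt_zero : twFilt C A M 0 = ⊥ := by
  rw [twFilt, Submodule.span_eq_bot]
  rintro x ⟨r, a, c, m, hr, hc, rfl⟩
  rw [C.nonneg r (by simpa using hr)] at hc
  rw [(Submodule.mem_bot ℚ).1 hc]
  simp

theorem twFilt_exhaustive (x : A.carrier ⊗[ℚ] (C.carrier ⊗[ℚ] M)) :
    ∃ p, x ∈ twFilt C A M p := by
  have hadd : ∀ x y : A.carrier ⊗[ℚ] (C.carrier ⊗[ℚ] M), (∃ p, x ∈ twFilt C A M p) →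
      (∃ p, y ∈ twFilt C A M p) → ∃ p, x + y ∈ twFilt C A M p := by
    rintro x y ⟨p, hp⟩ ⟨q, hq⟩
    exact ⟨max p q, Submodule.add_mem _ (twFilt_mono C A (le_max_left _ _) hp)
      (twFilt_mono C A (le_max_right _ _) hq)⟩
  induction x with
  | zero => exact ⟨0, Submodule.zero_mem _⟩
  | add x y hx hy => exact hadd x y hx hy
  | tmul a y =>
    induction y with
    | zero => exact ⟨0, by simp⟩
    | add x y hx hy => rw [TensorProduct.tmul_add]; exact hadd _ _ hx hy
    | tmul c m =>
      induction c using DirectSum.Decomposition.inductionOn C.grading with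
      | zero => exact ⟨0, by simp⟩
      | add x y hx hy =>
        rw [TensorProduct.add_tmul, TensorProduct.tmul_add]; exact hadd _ _ hx hy
      | @homogeneous i c =>
        exact ⟨(i + 1).toNat, Submodule.subset_span ⟨i, a, c, m, by omega, c.2, rfl⟩⟩

theorem twQ_filt (u : M →ₗ[ℚ] M') (p : ℕ) :
    twFilt C A M p ≤ (twFilt C A M' p).comap (twQ C A u) := by
  rw [twFilt, Submodule.span_le]
  rintro x ⟨r, a, c, m, hr, hc, rfl⟩
  exact Submodule.subset_span ⟨r, a, c, u m, hr, hc, by simp [twQ]⟩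

theorem twP_filt (u : M →ₗ[ℚ] M') (p : ℕ) :
    twFilt C A M p ≤ (twFilt C A M' p).comap (twP C A u) := by
  rw [twFilt, Submodule.span_le]
  rintro x ⟨r, a, c, m, hr, hc, rfl⟩
  refine Submodule.subset_span ⟨r, parityOf A.grading a, parityOf C.grading c, u m, hr, ?_,
    by simp [twP]⟩
  rw [parityOf_of_mem _ hc]
  exact Submodule.smul_mem _ _ hc

/-- The total differential of `A ⊗_τ (C ⊗^τ M)`. -/
def twD (τ : TwistingChain C A) (M : DGModule A) :
    A.carrier ⊗[ℚ] (C.carrier ⊗[ℚ] M.carrier) →ₗ[ℚ]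
      A.carrier ⊗[ℚ] (C.carrier ⊗[ℚ] M.carrier) :=
  extDiff C A τ (C.carrier ⊗[ℚ] M.carrier)
    (coextDiff C A τ M.carrier M.d M.actionMap) (coextCoact C M.carrier)

theorem twD_sq (τ : TwistingChain C A) (M : DGModule A)
    (x : A.carrier ⊗[ℚ] (C.carrier ⊗[ℚ] M.carrier)) :
    twD C A τ M (twD C A τ M x) = 0 :=
  extDiff_sq C A τ _ _ _ (coextDiff_sq C A τ M) (coextCoact_chain C A τ M)
    (coextCoact_coassoc C M.carrier) x

theorem twD_sub_twD0 (τ : TwistingChain C A) (M : DGModule A)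
    (hτ : ∀ j ≤ 0, ∀ c ∈ C.grading j, τ.toFun c = 0) (p : ℕ) :
    twFilt C A M.carrier (p + 1) ≤
      (twFilt C A M.carrier p).comap (twD C A τ M - twD0 C A M.carrier M.d) := by
  rw [twFilt, Submodule.span_le]
  rintro x ⟨r, a, c, m, hr, hc, rfl⟩
  have e : (twD C A τ M - twD0 C A M.carrier M.d) (a ⊗ₜ (c ⊗ₜ m))
      = parityOf A.grading a ⊗ₜ (C.d c ⊗ₜ m)
        + parityOf A.grading a ⊗ₜ (coextKappa C A τ M m (C.comul c))
        - extPhi C A τ _ (parityOf A.grading a)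
            ((TensorProduct.assoc ℚ C.carrier C.carrier M.carrier) (C.comul c ⊗ₜ m)) := by
    rw [LinearMap.sub_apply, twD, extDiff_tmul, coextDiff_tmul]
    simp only [coextCoact, twD0, LinearMap.add_apply, TensorProduct.map_tmul, LinearMap.comp_apply,
      LinearEquiv.coe_coe, LinearMap.id_apply, TensorProduct.tmul_add]
    abel
  have hz := C.comul_mem r c hc
  push_cast at hr
  rw [SetLike.mem_coe, Submodule.mem_comap, e]
  refine Submodule.sub_mem _ (Submodule.add_mem _ ?_ ?_) ?_
  · exact Submodule.subset_span ⟨r - 1, _, _, _, by omega, C.d_mem r c hc, rfl⟩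
  · refine (tensorGrading_induction ((twFilt C A M.carrier p).comap
      ((TensorProduct.mk ℚ A.carrier (C.carrier ⊗[ℚ] M.carrier) (parityOf A.grading a)).comp
        (coextKappa C A τ M m))) ?_) hz
    intro i j hij v hv w hw
    rw [Submodule.mem_comap]
    simp only [LinearMap.comp_apply, TensorProduct.mk_apply, coextKappa, TensorProduct.map_tmul,
      LinearMap.flip_apply, parityOf_of_mem _ hv]
    by_cases hj : j ≤ 0
    · rw [hτ j hj w hw]; simp
    · exact Submodule.subset_span ⟨i, _, _, _, by omega, Submodule.smul_mem _ _ hv, rfl⟩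
  · refine (tensorGrading_induction ((twFilt C A M.carrier p).comap
      ((extPhi C A τ _ (parityOf A.grading a)).comp
        ((TensorProduct.assoc ℚ C.carrier C.carrier M.carrier).toLinearMap.comp
          ((TensorProduct.mk ℚ _ M.carrier).flip m)))) ?_) hz
    intro i j hij v hv w hw
    rw [Submodule.mem_comap]
    simp only [LinearMap.comp_apply, TensorProduct.mk_apply, extPhi, TensorProduct.map_tmul,
      LinearMap.flip_apply, LinearEquiv.coe_coe, TensorProduct.assoc_tmul, LinearMap.id_apply]
    by_cases hj : i ≤ 0
    · rw [hτ i hj v hv]; simp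
    · exact Submodule.subset_span ⟨j, _, _, _, by omega, hw, rfl⟩

theorem twD_natural (τ : TwistingChain C A) (M M' : DGModule A)
    (f : M.carrier →ₗ[ℚ] M'.carrier) (hf : IsModuleHom A M M' f)
    (x : A.carrier ⊗[ℚ] (C.carrier ⊗[ℚ] M.carrier)) :
    twQ C A f (twD C A τ M x) = twD C A τ M' (twQ C A f x) := by
  have hd : ∀ m, f (M.d m) = M'.d (f m) := LinearMap.congr_fun hf.2.1
  have hs : ∀ a m, f (M.smul a m) = M'.smul a (f m) := fun a m => by
    simpa [DGModule.actionMap] using LinearMap.congr_fun hf.2.2 (a ⊗ₜ m)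
  have : (twQ C A f).comp (twD C A τ M) = (twD C A τ M').comp (twQ C A f) := by
    apply tensor3_ext
    intro a c m
    simp only [LinearMap.comp_apply, twQ, TensorProduct.map_tmul, LinearMap.id_apply, twD,
      extDiff_tmul, coextDiff_tmul, map_add, map_sub, hd, TensorProduct.tmul_add, coextCoact,
      LinearEquiv.coe_coe]
    have h1 : ∀ z, TensorProduct.map LinearMap.id f (coextKappa C A τ M m z)
        = coextKappa C A τ M' (f m) z := by
      intro z
      induction z with
      | zero => simp
      | tmul x y => simp [coextKappa, hs]
      | add x y hx hy => simp only [map_add, hx, hy]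
    have h2 : ∀ b z, TensorProduct.map LinearMap.id (TensorProduct.map LinearMap.id f)
          (extPhi C A τ (C.carrier ⊗[ℚ] M.carrier) b
            ((TensorProduct.assoc ℚ C.carrier C.carrier M.carrier) (z ⊗ₜ m)))
        = extPhi C A τ (C.carrier ⊗[ℚ] M'.carrier) b
            ((TensorProduct.assoc ℚ C.carrier C.carrier M'.carrier) (z ⊗ₜ f m)) := by
      intro b z
      induction z with
      | zero => simp
      | tmul x y => simp [extPhi]
      | add x y hx hy => simp only [map_add, TensorProduct.add_tmul, hx, hy]
    rw [h1, h2]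
  exact LinearMap.congr_fun this x

theorem isQuasiIso_twisted (τ : TwistingChain C A)
    (hτ : ∀ j ≤ 0, ∀ c ∈ C.grading j, τ.toFun c = 0) (M M' : DGModule A)
    (f : M.carrier →ₗ[ℚ] M'.carrier) (hf : IsModuleHom A M M' f) (hq : IsQuasiIso M.d M'.d f) :
    IsQuasiIso (twD C A τ M) (twD C A τ M') (twQ C A f) := by
  have hd : ∀ m, f (M.d m) = M'.d (f m) := LinearMap.congr_fun hf.2.1
  obtain ⟨s, hs⟩ := exists_contraction (coneDiff M.d M'.d f)
    (coneDiff_sq _ _ _ M.d_d M'.d_d hd) (cone_of_isQuasiIso _ _ _ hd hq)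
  let s11 : M.carrier →ₗ[ℚ] M.carrier :=
    (LinearMap.fst ℚ _ _).comp (s.comp (LinearMap.inl ℚ _ _))
  let s12 : M'.carrier →ₗ[ℚ] M.carrier :=
    (LinearMap.fst ℚ _ _).comp (s.comp (LinearMap.inr ℚ _ _))
  let s21 : M.carrier →ₗ[ℚ] M'.carrier :=
    (LinearMap.snd ℚ _ _).comp (s.comp (LinearMap.inl ℚ _ _))
  let s22 : M'.carrier →ₗ[ℚ] M'.carrier :=
    (LinearMap.snd ℚ _ _).comp (s.comp (LinearMap.inr ℚ _ _))
  have hsx : ∀ x y, s (x, y) = (s11 x + s12 y, s21 x + s22 y) := by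
    intro x y
    have : ((x, y) : M.carrier × M'.carrier) = (x, 0) + (0, y) := by simp
    rw [this, map_add]
    rfl
  have r11 : -(M.d.comp s11 + s11.comp M.d) + s12.comp f = LinearMap.id := by
    ext x
    have := congrArg Prod.fst (hs (x, 0))
    simp only [coneDiff_apply, hsx, map_zero, add_zero, map_neg, Prod.fst_add] at this
    simp only [LinearMap.add_apply, LinearMap.neg_apply, LinearMap.comp_apply, LinearMap.id_apply]
    rw [← add_assoc] at this
    rw [neg_add]
    exact this
  have r12 : M.d.comp s12 - s12.comp M'.d = 0 := by
    ext x
    have := congrArg Prod.fst (hs (0, x))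
    simp only [coneDiff_apply, hsx, map_zero, zero_add, map_neg, Prod.fst_add, neg_zero] at this
    simp only [LinearMap.sub_apply, LinearMap.comp_apply, LinearMap.zero_apply]
    rw [← neg_eq_zero, ← this]
    abel
  have r21 : f.comp s11 + (M'.d.comp s21 - s21.comp M.d) + s22.comp f = 0 := by
    ext x
    have := congrArg Prod.snd (hs (x, 0))
    simp only [coneDiff_apply, hsx, map_zero, add_zero, map_neg, Prod.snd_add] at this
    simp only [LinearMap.add_apply, LinearMap.sub_apply, LinearMap.comp_apply,
      LinearMap.zero_apply]
    rw [← this]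
    abel
  have r22 : f.comp s12 + (M'.d.comp s22 + s22.comp M'.d) = LinearMap.id := by
    ext x
    have := congrArg Prod.snd (hs (0, x))
    simp only [coneDiff_apply, hsx, map_zero, zero_add, map_neg, Prod.snd_add, neg_zero] at this
    simp only [LinearMap.add_apply, LinearMap.comp_apply, LinearMap.id_apply]
    rw [← add_assoc]
    exact this
  apply isQuasiIso_of_cone
  let S : (A.carrier ⊗[ℚ] (C.carrier ⊗[ℚ] M.carrier)) × (A.carrier ⊗[ℚ] (C.carrier ⊗[ℚ] M'.carrier))
      →ₗ[ℚ] (A.carrier ⊗[ℚ] (C.carrier ⊗[ℚ] M.carrier)) ×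
        (A.carrier ⊗[ℚ] (C.carrier ⊗[ℚ] M'.carrier)) :=
    LinearMap.prod
      ((twP C A s11).comp (LinearMap.fst ℚ _ _) + (twQ C A s12).comp (LinearMap.snd ℚ _ _))
      ((twQ C A s21).comp (LinearMap.fst ℚ _ _) + (twP C A s22).comp (LinearMap.snd ℚ _ _))
  have hSx : ∀ x, S x = (twP C A s11 x.1 + twQ C A s12 x.2, twQ C A s21 x.1 + twP C A s22 x.2) :=
    fun x => rfl
  refine acyclic_of_perturbation _
    (coneDiff (twD0 C A M.carrier M.d) (twD0 C A M'.carrier M'.d) (twQ C A f)) S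
    (fun p => (twFilt C A M.carrier p).prod (twFilt C A M'.carrier p)) ?_ ?_ ?_ ?_ ?_ ?_
  · simp [twFilt_zero]
  · rintro ⟨x, y⟩
    obtain ⟨p, hp⟩ := twFilt_exhaustive C A x
    obtain ⟨q, hq⟩ := twFilt_exhaustive C A y
    exact ⟨max p q, twFilt_mono C A (le_max_left _ _) hp, twFilt_mono C A (le_max_right _ _) hq⟩
  · exact coneDiff_sq _ _ _ (twD_sq C A τ M) (twD_sq C A τ M') (twD_natural C A τ M M' f hf)
  · rintro ⟨x, y⟩
    have q11 := LinearMap.congr_fun (congrArg (twQ C A) r11) x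
    have q12 := LinearMap.congr_fun (congrArg (twP C A) r12) y
    have q21 := LinearMap.congr_fun (congrArg (twP C A) r21) x
    have q22 := LinearMap.congr_fun (congrArg (twQ C A) r22) y
    rw [twQ_add, twQ_neg, ← twD0_twP, ← twQ_twQ, twQ_id] at q11
    rw [← twD0_twQ, twP_zero] at q12
    rw [twP_add, twP_add, ← twD0_twQ, ← twP_twQ C A f s22,
      ← twQ_twP C A s11 f, twP_zero] at q21
    rw [twQ_add, ← twD0_twP, ← twQ_twQ, twQ_id] at q22
    simp only [LinearMap.add_apply, LinearMap.sub_apply, LinearMap.neg_apply,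
      LinearMap.comp_apply, LinearMap.id_apply, LinearMap.zero_apply] at q11 q12 q21 q22
    simp only [coneDiff_apply, hSx, map_add, map_neg]
    refine Prod.ext ?_ ?_
    · simp only [Prod.fst_add]
      refine Eq.trans ?_ ((congrArg₂ (· - ·) q11 q12).trans (sub_zero _))
      abel
    · simp only [Prod.snd_add]
      refine Eq.trans ?_ ((congrArg₂ (· + ·) q21 q22).trans (zero_add _))
      abel
  · rintro p ⟨x, y⟩ ⟨hx, hy⟩
    exact ⟨Submodule.add_mem _ (twP_filt C A s11 p hx) (twQ_filt C A s12 p hy),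
      Submodule.add_mem _ (twQ_filt C A s21 p hx) (twP_filt C A s22 p hy)⟩
  · rintro p ⟨x, y⟩ ⟨hx, hy⟩
    have h1 := twD_sub_twD0 C A τ M hτ p hx
    have h2 := twD_sub_twD0 C A τ M' hτ p hy
    rw [Submodule.mem_comap, LinearMap.sub_apply] at h1 h2
    refine ⟨?_, ?_⟩
    · change -(twD C A τ M x) - -(twD0 C A M.carrier M.d x) ∈ twFilt C A M.carrier p
      rw [← neg_sub']
      exact Submodule.neg_mem _ h1
    · change (twQ C A f x + twD C A τ M' y) - (twQ C A f x + twD0 C A M'.carrier M'.d y)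
        ∈ twFilt C A M'.carrier p
      rw [add_sub_add_left_eq_sub]
      exact h2

end Filtration

/-- For a 2-reduced cocommutative dg coalgebra `C`, the twisted
coextension functor `t_*` sends quasi-isomorphisms of left `ΩC`-modules to
`t`-equivalences of `C`-comodules: if `f : A → B` is a quasi-isomorphism of
`ΩC`-modules then `t^!(t_*f) : ΩC ⊗_t (C ⊗^t A) → ΩC ⊗_t (C ⊗^t B)` is a
quasi-isomorphism. -/
theorem twisted_coextension_sends_quasiIso_to_tEquiv (C : CoaugDGCoalgebra)
    (hred : C.TwoReduced) (hcc : C.toDGCoalgebra.Cocomm) (Ω : CobarData C)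
    (A B : DGModule Ω.alg) (f : A.carrier →ₗ[ℚ] B.carrier)
    (hf : IsModuleHom Ω.alg A B f) (hq : IsQuasiIso A.d B.d f) :
    IsQuasiIso
      (extDiff C.toDGCoalgebra Ω.alg Ω.t (C.carrier ⊗[ℚ] A.carrier)
        (coextDiff C.toDGCoalgebra Ω.alg Ω.t A.carrier A.d A.actionMap)
        (coextCoact C.toDGCoalgebra A.carrier))
      (extDiff C.toDGCoalgebra Ω.alg Ω.t (C.carrier ⊗[ℚ] B.carrier)
        (coextDiff C.toDGCoalgebra Ω.alg Ω.t B.carrier B.d B.actionMap)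
        (coextCoact C.toDGCoalgebra B.carrier))
      (TensorProduct.map LinearMap.id (TensorProduct.map LinearMap.id f)) := by
  have htz : ∀ j ≤ 0, ∀ c ∈ C.grading j, Ω.t.toFun c = 0 := by
    intro j hj c hc
    rcases hj.lt_or_eq with h | rfl
    · rw [C.nonneg j h] at hc
      rw [(Submodule.mem_bot ℚ).1 hc, map_zero]
    · rw [hred.1] at hc
      obtain ⟨r, rfl⟩ := Submodule.mem_span_singleton.1 hc
      rw [map_smul, Ω.t_one, smul_zero]
  exact isQuasiIso_twisted C.toDGCoalgebra Ω.alg Ω.t htz A B f hf hq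

end
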